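/- Let G be a finite group, N a normal subgroup of G, and π^N : G → Aut⁺(C(G/N)) the positive representation defined by π^N_s e_{tN} = e_{stN}. Let ρ be a band irreducible positive representation of G in a nonzero finite dimensional Archimedean Riesz space E that is linearly equivalent to π^N, i.e., there exists an invertible linear map T : E → C(G/N) with T ∘ ρ_s = π^N_s ∘ T for all s ∈ G. Then ρ is order equivalent to π^N, i.e., such an intertwiner T can be chosen to be a lattice isomorphism. -/

import Mathlib

/-- A (Riesz) ideal of an ordered real vector space: a submodule `I` such that
`|x| ≤ |y|` and `y ∈ I` imply `x ∈ I`. -/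
def IsRieszIdeal {E : Type*} [AddCommGroup E] [Lattice E] [Module ℝ E]
    (I : Submodule ℝ E) : Prop :=
  ∀ x y : E, |x| ≤ |y| → y ∈ I → x ∈ I

/-- A band: an ideal closed under suprema of its subsets (when they exist in `E`). -/
def IsBand {E : Type*} [AddCommGroup E] [Lattice E] [Module ℝ E]
    (B : Submodule ℝ E) : Prop :=
  IsRieszIdeal B ∧ ∀ (D : Set E) (x : E), D ⊆ (B : Set E) → IsLUB D x → x ∈ B

/-- The disjoint complement of a set `D`. -/
def disjComplement {E : Type*} [AddCommGroup E] [Lattice E] (D : Set E) : Set E :=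
  {x : E | ∀ y ∈ D, |x| ⊓ |y| = 0}

/-- A projection band: a band `B` with `E = B ⊕ Bᵈ`. -/
def IsProjectionBand {E : Type*} [AddCommGroup E] [Lattice E] [Module ℝ E]
    (B : Submodule ℝ E) : Prop :=
  IsBand B ∧ ∀ x : E, ∃ y ∈ B, ∃ z ∈ disjComplement (B : Set E), x = y + z

/-- An order direct sum decomposition `E = L ⊕ M`: every element decomposes uniquely
as a sum of an element of `L` and an element of `M`, and an element is positive iff
both its components are positive. -/
def IsOrderDecomposition {E : Type*} [AddCommGroup E] [Lattice E] [Module ℝ E]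
    (L M : Submodule ℝ E) : Prop :=
  (∀ x : E, ∃ y ∈ L, ∃ z ∈ M, x = y + z) ∧
  (∀ x : E, x ∈ L → x ∈ M → x = 0) ∧
  (∀ y z : E, y ∈ L → z ∈ M → (0 ≤ y + z ↔ 0 ≤ y ∧ 0 ≤ z))

/-- A homomorphism `ρ : G →* (E ≃ₗ[ℝ] E)` is a positive representation when each
`ρ s` is an order isomorphism (hence a lattice automorphism). -/
def IsPositiveRep {E : Type*} [AddCommGroup E] [Lattice E] [Module ℝ E]
    {G : Type*} [Group G] (ρ : G →* (E ≃ₗ[ℝ] E)) : Prop :=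
  ∀ (s : G) (x y : E), x ≤ y ↔ ρ s x ≤ ρ s y

/-- A submodule is `ρ`-invariant if it is mapped into itself by every `ρ s`. -/
def InvariantSubmodule {E : Type*} [AddCommGroup E] [Lattice E] [Module ℝ E]
    {G : Type*} [Group G] (ρ : G →* (E ≃ₗ[ℝ] E)) (B : Submodule ℝ E) : Prop :=
  ∀ (s : G), ∀ x ∈ B, ρ s x ∈ B

/-- `ρ` is order indecomposable if the only `ρ`-invariant order direct sum
decompositions `E = L ⊕ M` are the trivial ones. -/
def OrderIndecomposable {E : Type*} [AddCommGroup E] [Lattice E] [Module ℝ E]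
    {G : Type*} [Group G] (ρ : G →* (E ≃ₗ[ℝ] E)) : Prop :=
  ∀ L M : Submodule ℝ E, IsOrderDecomposition L M →
    InvariantSubmodule ρ L → InvariantSubmodule ρ M → L = ⊥ ∨ L = ⊤

/-- `ρ` is projection band irreducible if the only `ρ`-invariant projection bands
are `{0}` and `E`. -/
def ProjectionBandIrreducible {E : Type*} [AddCommGroup E] [Lattice E] [Module ℝ E]
    {G : Type*} [Group G] (ρ : G →* (E ≃ₗ[ℝ] E)) : Prop :=
  ∀ B : Submodule ℝ E, IsProjectionBand B → InvariantSubmodule ρ B → B = ⊥ ∨ B = ⊤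


/-- `ρ` is band irreducible if the only `ρ`-invariant bands are `{0}` and `E`. -/
def BandIrreducible {E : Type*} [AddCommGroup E] [Lattice E] [Module ℝ E]
    {G : Type*} [Group G] (ρ : G →* (E ≃ₗ[ℝ] E)) : Prop :=
  ∀ B : Submodule ℝ E, IsBand B → InvariantSubmodule ρ B → B = ⊥ ∨ B = ⊤

/-- `E` is Archimedean: if `0 ≤ n • x ≤ y` for all positive integers `n`, then `x = 0`. -/
def RieszArchimedean (E : Type*) [AddCommGroup E] [Lattice E] [Module ℝ E] : Prop :=
  ∀ x y : E, (∀ n : ℕ, 0 < n → 0 ≤ n • x ∧ n • x ≤ y) → x = 0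

/-- The lattice automorphism of `C(G/H) = (G ⧸ H → ℝ)` given by left translation
by `s`; it maps the basis vector `e_{tH}` to `e_{stH}`. -/
noncomputable def cosetShift {G : Type*} [Group G] (H : Subgroup G) (s : G) :
    (G ⧸ H → ℝ) ≃ₗ[ℝ] (G ⧸ H → ℝ) where
  toFun f := fun c => f (s⁻¹ • c)
  invFun f := fun c => f (s • c)
  map_add' _ _ := rfl
  map_smul' _ _ := rfl
  left_inv f := funext fun c => by simp [smul_smul]
  right_inv f := funext fun c => by simp [smul_smul]

/-- The canonical positive representation `π^H` of `G` on `C(G/H)`, with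
`π^H_s e_{tH} = e_{stH}`. -/
noncomputable def cosetRep (G : Type*) [Group G] (H : Subgroup G) :
    G →* ((G ⧸ H → ℝ) ≃ₗ[ℝ] (G ⧸ H → ℝ)) where
  toFun s := cosetShift H s
  map_one' := by
    apply LinearEquiv.toLinearMap_injective
    ext f c
    simp [cosetShift]
  map_mul' s t := by
    apply LinearEquiv.toLinearMap_injective
    ext f c
    simp [cosetShift, mul_smul]

section RieszAux

variable {E : Type*} [AddCommGroup E] [Lattice E] [Module ℝ E]
  [IsOrderedAddMonoid E] [PosSMulMono ℝ E]

lemma aux_abs_smul_le (c : ℝ) (a : E) : |c • a| ≤ |c| • |a| := by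
  have key : ∀ (c : ℝ), 0 ≤ c → |c • a| ≤ c • |a| := by
    intro c hc
    refine abs_le'.2 ⟨smul_le_smul_of_nonneg_left (le_abs_self a) hc, ?_⟩
    rw [← smul_neg]
    exact smul_le_smul_of_nonneg_left (neg_le_abs a) hc
  rcases le_total 0 c with h | h
  · rw [abs_of_nonneg h]; exact key c h
  · rw [abs_of_nonpos h]
    have := key (-c) (by linarith)
    rwa [neg_smul, abs_neg] at this

lemma aux_add_inf (a b u : E) (ha : 0 ≤ a) (hb : 0 ≤ b) (hu : 0 ≤ u) :
    (a + b) ⊓ u ≤ a ⊓ u + b ⊓ u := by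
  rw [add_inf, inf_add, inf_add]
  refine le_inf (le_inf inf_le_left ?_) (le_inf ?_ ?_)
  · exact inf_le_right.trans (le_add_of_nonneg_right hb)
  · exact inf_le_right.trans (le_add_of_nonneg_left ha)
  · exact inf_le_right.trans (le_add_of_nonneg_left hu)

lemma aux_disj_mono {a b u : E} (ha : 0 ≤ a) (hu : 0 ≤ u) (hab : a ≤ b) (h : b ⊓ u = 0) :
    a ⊓ u = 0 :=
  le_antisymm (h ▸ inf_le_inf_right u hab) (le_inf ha hu)

/-- Disjoint complement of a set of vectors as a submodule. -/
def auxD (S : Set E) : Submodule ℝ E where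
  carrier := {z | ∀ u ∈ S, |z| ⊓ |u| = 0}
  zero_mem' := by
    intro u _
    simp
  add_mem' := by
    intro a b ha hb u hu
    refine le_antisymm ?_ (le_inf (abs_nonneg _) (abs_nonneg _))
    calc |a + b| ⊓ |u| ≤ (|a| + |b|) ⊓ |u| := inf_le_inf_right _ (abs_add_le a b)
      _ ≤ |a| ⊓ |u| + |b| ⊓ |u| := aux_add_inf _ _ _ (abs_nonneg _) (abs_nonneg _) (abs_nonneg _)
      _ = 0 := by rw [ha u hu, hb u hu, add_zero]
  smul_mem' := by
    intro c a ha u hu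
    set d : ℝ := max |c| 1 with hd
    have hd1 : 1 ≤ d := le_max_right _ _
    have hd0 : 0 < d := by linarith
    have h1 : |c • a| ≤ d • |a| := by
      refine (aux_abs_smul_le c a).trans ?_
      have : 0 ≤ (d - |c|) • |a| := smul_nonneg (sub_nonneg.2 (le_max_left _ _)) (abs_nonneg a)
      rw [sub_smul] at this
      exact sub_nonneg.1 this
    set w := |c • a| ⊓ |u| with hw
    have hw0 : 0 ≤ w := le_inf (abs_nonneg _) (abs_nonneg _)
    have h2 : d⁻¹ • w ≤ |a| := by
      have := smul_le_smul_of_nonneg_left (inf_le_left.trans h1 : w ≤ d • |a|)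
        (inv_nonneg.2 hd0.le)
      rwa [smul_smul, inv_mul_cancel₀ hd0.ne', one_smul] at this
    have h3 : d⁻¹ • w ≤ |u| := by
      have h4 : d⁻¹ • w ≤ w := by
        have : 0 ≤ (1 - d⁻¹) • w := smul_nonneg (sub_nonneg.2 (inv_le_one_of_one_le₀ hd1)) hw0
        rw [sub_smul, one_smul] at this
        exact sub_nonneg.1 this
      exact h4.trans inf_le_right
    have h5 : d⁻¹ • w = 0 :=
      le_antisymm ((le_inf h2 h3).trans (ha u hu).le) (smul_nonneg (inv_nonneg.2 hd0.le) hw0)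
    exact (smul_eq_zero.1 h5).resolve_left (inv_ne_zero hd0.ne')

lemma aux_mem_D {S : Set E} {z : E} : z ∈ auxD S ↔ ∀ u ∈ S, |z| ⊓ |u| = 0 := Iff.rfl

lemma auxD_ideal (S : Set E) : IsRieszIdeal (auxD S) := by
  intro x y hxy hy u hu
  exact aux_disj_mono (abs_nonneg _) (abs_nonneg _) hxy (hy u hu)

lemma auxD_band (S : Set E) : IsBand (auxD S) := by
  refine ⟨auxD_ideal S, ?_⟩
  intro D x hD hx
  rcases D.eq_empty_or_nonempty with rfl | ⟨d, hd⟩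
  · have h : ∀ y, x ≤ y := fun y => hx.2 (by simp [upperBounds])
    have h1 := h 0
    have h2 : 0 ≤ x := by
      have := h (x + x)
      exact nonneg_of_le_add_right this
    rw [le_antisymm h1 h2]
    exact zero_mem _
  · have hneg : x⁻ ∈ auxD S := by
      refine auxD_ideal S _ d ?_ (hD hd)
      rw [abs_of_nonneg (negPart_nonneg x), negPart_def]
      exact sup_le ((neg_le_neg (hx.1 hd)).trans (neg_le_abs d)) (abs_nonneg d)
    have hpos : x⁺ ∈ auxD S := by
      intro u hu
      rw [abs_of_nonneg (posPart_nonneg x)]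
      set w := x⁺ ⊓ |u| with hw
      have hw0 : 0 ≤ w := le_inf (posPart_nonneg _) (abs_nonneg _)
      have hub : ∀ e ∈ D, e ≤ x⁺ - w := by
        intro e he
        have h1 : e⁺ ⊓ w = 0 := by
          have h2 : |e| ⊓ |u| = 0 := hD he u hu
          refine le_antisymm ?_ (le_inf (posPart_nonneg _) hw0)
          rw [← h2]
          refine inf_le_inf ?_ inf_le_right
          rw [posPart_def]
          exact sup_le (le_abs_self e) (abs_nonneg e)
        have h3 : e⁺ + w = e⁺ ⊔ w := by
          rw [← inf_add_sup, h1, zero_add]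
        have h4 : e⁺ + w ≤ x⁺ := by
          rw [h3]
          exact sup_le (posPart_mono (hx.1 he)) inf_le_left
        exact (le_posPart e).trans (le_sub_iff_add_le.2 h4)
      have h5 : x ≤ x⁺ - w := hx.2 hub
      have h6 : x⁺ ≤ x⁺ - w := by
        conv_lhs => rw [posPart_def]
        exact sup_le h5 (sub_nonneg.2 inf_le_left)
      refine le_antisymm ?_ hw0
      have := le_sub_iff_add_le.1 h6
      exact nonpos_of_add_le_right this
    have := sub_mem hpos hneg
    rwa [posPart_sub_negPart] at this

/-- Archimedean: closedness. -/
lemma aux_arch (harch : RieszArchimedean E) {x u : E}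
    (h : ∀ n : ℕ, 0 < n → (n : ℝ) • x ≤ u) (hu : 0 ≤ u) : x ≤ 0 := by
  have : x⁺ = 0 := by
    refine harch x⁺ u ?_
    intro n hn
    have hn0 : (0 : ℝ) < n := by exact_mod_cast hn
    rw [← Nat.cast_smul_eq_nsmul ℝ]
    refine ⟨smul_nonneg hn0.le (posPart_nonneg x), ?_⟩
    have h1 : x⁺ ≤ (n : ℝ)⁻¹ • u := by
      rw [posPart_def]
      refine sup_le ?_ (smul_nonneg (inv_nonneg.2 hn0.le) hu)
      have := smul_le_smul_of_nonneg_left (h n hn) (inv_nonneg.2 hn0.le)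
      rwa [smul_smul, inv_mul_cancel₀ hn0.ne', one_smul] at this
    have := smul_le_smul_of_nonneg_left h1 hn0.le
    rwa [smul_smul, mul_inv_cancel₀ hn0.ne', one_smul] at this
  exact (posPart_eq_zero).1 this

lemma aux_smul_mono {a b : ℝ} (h : a ≤ b) {u : E} (hu : 0 ≤ u) : a • u ≤ b • u := by
  have : 0 ≤ (b - a) • u := smul_nonneg (sub_nonneg.2 h) hu
  rw [sub_smul] at this
  exact sub_nonneg.1 this

/-- The largest multiple of `u` below `x`. -/
lemma aux_max (harch : RieszArchimedean E) {x u : E} (hx : 0 ≤ x) (hu : 0 ≤ u) (hu0 : u ≠ 0) :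
    ∃ c : ℝ, 0 ≤ c ∧ c • u ≤ x ∧ ∀ t : ℝ, t • u ≤ x → t ≤ c := by
  set A : Set ℝ := {t | t • u ≤ x} with hA
  have h0 : (0 : ℝ) ∈ A := by simp [hA, hx]
  have hb : BddAbove A := by
    by_contra hnb
    apply hu0
    refine le_antisymm (aux_arch harch (u := x) ?_ hx) hu
    intro n _
    rw [not_bddAbove_iff] at hnb
    obtain ⟨t, ht, hnt⟩ := hnb n
    exact (aux_smul_mono hnt.le hu).trans ht
  refine ⟨sSup A, le_csSup hb h0, ?_, fun t ht => le_csSup hb ht⟩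
  refine sub_nonpos.1 (aux_arch harch (u := u) ?_ hu)
  intro n hn
  have hn0 : (0 : ℝ) < n := by exact_mod_cast hn
  obtain ⟨t, ht, hlt⟩ := exists_lt_of_lt_csSup ⟨0, h0⟩
    (show sSup A - (n : ℝ)⁻¹ < sSup A by linarith [inv_pos.2 hn0])
  have h1 : sSup A • u - x ≤ (n : ℝ)⁻¹ • u := by
    have h2 : (sSup A - (n : ℝ)⁻¹) • u ≤ x := (aux_smul_mono hlt.le hu).trans ht
    rw [sub_smul] at h2
    rw [sub_le_iff_le_add] at h2 ⊢
    rwa [add_comm]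
  have := smul_le_smul_of_nonneg_left h1 hn0.le
  rwa [smul_smul, mul_inv_cancel₀ hn0.ne', one_smul] at this

/-- Atoms. -/
def AuxAtom (u : E) : Prop := 0 ≤ u ∧ u ≠ 0 ∧ ∀ y, 0 ≤ y → y ≤ u → ∃ c : ℝ, y = c • u

lemma aux_exists_atom [Nontrivial E] [FiniteDimensional ℝ E] (harch : RieszArchimedean E) :
    ∃ u : E, AuxAtom u := by
  obtain ⟨v, hv⟩ := exists_ne (0 : E)
  let P : Set (Submodule ℝ E) := {M | ∃ x : E, 0 ≤ x ∧ x ≠ 0 ∧ M = auxD {x}}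
  have hP : P.Nonempty := ⟨_, |v|, abs_nonneg v, fun h => hv (le_antisymm (h ▸ le_abs_self v)
    (neg_nonpos.1 (h ▸ neg_le_abs v))), rfl⟩
  obtain ⟨M, ⟨x, hx, hx0, rfl⟩, hmax⟩ := (wellFounded_gt (α := Submodule ℝ E)).has_min P hP
  refine ⟨x, hx, hx0, ?_⟩
  intro y hy hyx
  by_contra hne
  obtain ⟨a, ha0, ha, hamax⟩ := aux_max harch hy hx hx0
  -- lower multiple from the reflected vector
  obtain ⟨b, hb0, hb, hbmax⟩ := aux_max harch (sub_nonneg.2 hyx) hx hx0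
  have hyb : y ≤ (1 - b) • x := by
    rw [sub_smul, one_smul]
    exact le_sub_comm.1 hb
  have hab : a < 1 - b := by
    by_contra hcon
    push Not at hcon
    exact hne ⟨a, le_antisymm (hyb.trans (aux_smul_mono hcon hx)) ha⟩
  obtain ⟨c, hac, hcb⟩ := exists_between hab
  set z := y - c • x with hz
  have hc0 : 0 ≤ c := by linarith
  have hzp : z⁺ ≠ 0 := by
    intro h
    have h1 : z ≤ 0 := posPart_eq_zero.1 h
    have h2 : (1 - c) • x ≤ x - y := by
      rw [sub_smul, one_smul]
      exact sub_le_sub_left (sub_nonpos.1 h1) x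
    linarith [hbmax _ h2]
  have hzn : z⁻ ≠ 0 := by
    intro h
    have h1 : 0 ≤ z := negPart_eq_zero.1 h
    linarith [hamax _ (sub_nonneg.1 h1)]
  have hzpx : z⁺ ≤ x := by
    rw [posPart_def]
    refine sup_le ?_ hx
    exact (sub_le_self y (smul_nonneg hc0 hx)).trans hyx
  have hznx : z⁻ ≤ x := by
    rw [negPart_def]
    refine sup_le ?_ hx
    rw [hz, neg_sub]
    refine (sub_le_self _ hy).trans ?_
    have := aux_smul_mono (show c ≤ 1 by linarith) hx
    rwa [one_smul] at this
  refine hmax (auxD {z⁺}) ⟨z⁺, posPart_nonneg z, hzp, rfl⟩ ?_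
  refine lt_of_le_of_ne ?_ ?_
  · intro w hw u hu
    rw [Set.mem_singleton_iff] at hu
    subst hu
    have h1 : |w| ⊓ |x| = 0 := hw x rfl
    rw [abs_of_nonneg hx] at h1
    rw [abs_of_nonneg (posPart_nonneg z)]
    exact le_antisymm (h1 ▸ inf_le_inf_left _ hzpx) (le_inf (abs_nonneg _) (posPart_nonneg _))
  · intro heq
    have h1 : z⁻ ∈ auxD {z⁺} := by
      intro u hu
      rw [Set.mem_singleton_iff] at hu
      subst hu
      rw [abs_of_nonneg (posPart_nonneg z), abs_of_nonneg (negPart_nonneg z), inf_comm]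
      exact posPart_inf_negPart_eq_zero z
    rw [← heq] at h1
    have h2 : |z⁻| ⊓ |x| = 0 := h1 x rfl
    rw [abs_of_nonneg hx, abs_of_nonneg (negPart_nonneg z), inf_eq_left.2 hznx] at h2
    exact hzn h2

/-- Projection off finitely many atoms. -/
lemma aux_proj (harch : RieszArchimedean E) {ι : Type*} (v : ι → E) (hv : ∀ i, AuxAtom (v i))
    (s : Finset ι) (x : E) (hx : 0 ≤ x) :
    ∃ y, 0 ≤ y ∧ x - y ∈ Submodule.span ℝ (Set.range v) ∧ ∀ i ∈ s, y ⊓ v i = 0 := by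
  classical
  induction s using Finset.induction_on with
  | empty => exact ⟨x, hx, by simp, by simp⟩
  | insert i s his ih =>
    obtain ⟨y, hy, hxy, hd⟩ := ih
    obtain ⟨hi0, hine, hat⟩ := hv i
    obtain ⟨c, hc0, hc, hmax⟩ := aux_max harch hy hi0 hine
    have hy' : 0 ≤ y - c • v i := sub_nonneg.2 hc
    refine ⟨y - c • v i, hy', ?_, ?_⟩
    · have : x - (y - c • v i) = (x - y) + c • v i := by abel
      rw [this]
      exact add_mem hxy (Submodule.smul_mem _ _ (Submodule.subset_span ⟨i, rfl⟩))
    · intro j hj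
      rcases Finset.mem_insert.1 hj with rfl | hj
      · have hw0 : 0 ≤ (y - c • v j) ⊓ v j := le_inf hy' hi0
        obtain ⟨t, ht⟩ := hat _ hw0 inf_le_right
        have h1 : t • v j ≤ y - c • v j := ht ▸ inf_le_left
        have h2 : (t + c) • v j ≤ y := by
          rw [add_smul]; exact le_sub_iff_add_le.1 h1
        have h3 : t ≤ 0 := by linarith [hmax _ h2]
        refine le_antisymm ?_ hw0
        rw [ht]
        have := aux_smul_mono h3 hi0
        rwa [zero_smul] at this
      · exact aux_disj_mono hy' (hv j).1 (sub_le_self y (smul_nonneg hc0 hi0)) (hd j hj)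

/-- Atoms that form a basis: the coordinates of a positive vector are positive. -/
lemma aux_coord {ι : Type*} [Fintype ι] (b : Module.Basis ι ℝ E) (hv : ∀ i, AuxAtom (b i)) (x : E) :
    0 ≤ x ↔ 0 ≤ b.equivFun x := by
  classical
  have hsum : ∑ i, b.equivFun x i • b i = x := b.sum_equivFun x
  constructor
  · intro hx i
    by_contra hneg
    simp only [Pi.zero_apply, not_le] at hneg
    set f := b.equivFun x with hf
    have hdisj : ∀ j, j ≠ i → b j ∈ auxD {b i} := by
      intro j hj u hu
      rw [Set.mem_singleton_iff] at hu
      subst hu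
      rw [abs_of_nonneg (hv i).1, abs_of_nonneg (hv j).1]
      have h0 := le_inf (hv j).1 (hv i).1
      obtain ⟨s, hs⟩ := (hv j).2.2 _ h0 inf_le_left
      obtain ⟨t, ht⟩ := (hv i).2.2 _ h0 inf_le_right
      have h1 : s • b j = t • b i := hs ▸ ht
      have h2 := congrArg (fun y => b.repr y j) h1
      simp [Finsupp.single_apply, hj.symm] at h2
      rw [hs, h2, zero_smul]
    set q := ∑ j ∈ Finset.univ.erase i, |f j| • b j with hq
    have hqD : q ∈ auxD {b i} := by
      refine sum_mem fun j hj => Submodule.smul_mem _ _ (hdisj j (Finset.ne_of_mem_erase hj))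
    have hp0 : 0 ≤ (-f i) • b i := smul_nonneg (by linarith) (hv i).1
    have hpq : (-f i) • b i ≤ q := by
      have h1 : f i • b i + ∑ j ∈ Finset.univ.erase i, f j • b j = x := by
        rw [Finset.add_sum_erase _ (fun j => f j • b j) (Finset.mem_univ i)]
        exact hsum
      have h2 : ∑ j ∈ Finset.univ.erase i, f j • b j ≤ q :=
        Finset.sum_le_sum fun j _ => aux_smul_mono (le_abs_self _) (hv j).1
      have h3 : 0 ≤ f i • b i + q := (hx.trans h1.ge).trans (add_le_add_right h2 _)
      rw [neg_smul]
      exact neg_le_iff_add_nonneg'.2 h3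
    have hpD : (-f i) • b i ∈ auxD {b i} := by
      refine auxD_ideal _ _ q ?_ hqD
      rw [abs_of_nonneg hp0, abs_of_nonneg (hp0.trans hpq)]
      exact hpq
    have hbD : b i ∈ auxD {b i} := by
      have := Submodule.smul_mem _ (-f i)⁻¹ hpD
      rwa [smul_smul, inv_mul_cancel₀ (by linarith), one_smul] at this
    have h4 : |b i| ⊓ |b i| = 0 := hbD (b i) rfl
    rw [inf_idem, abs_of_nonneg (hv i).1] at h4
    exact (hv i).2.1 h4
  · intro h
    rw [← hsum]
    exact Finset.sum_nonneg fun i _ => smul_nonneg (h i) (hv i).1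

end RieszAux

/-- A band irreducible positive representation of a finite group `G` in a nonzero
finite dimensional Archimedean Riesz space that is linearly equivalent to `π^N`, for a
normal subgroup `N` of `G`, is in fact order equivalent to `π^N`. -/
theorem stmt18 {G E : Type*} [Group G] [Finite G] [AddCommGroup E] [Lattice E]
    [Module ℝ E] [Nontrivial E] [FiniteDimensional ℝ E]
    (hadd : ∀ x y z : E, x ≤ y → x + z ≤ y + z)
    (hsmul : ∀ (c : ℝ) (x : E), 0 ≤ c → 0 ≤ x → 0 ≤ c • x)
    (harch : RieszArchimedean E)
    (N : Subgroup G) (hN : N.Normal)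
    (ρ : G →* (E ≃ₗ[ℝ] E)) (hρ : IsPositiveRep ρ) (hirr : BandIrreducible ρ)
    (hlin : ∃ T : E ≃ₗ[ℝ] (G ⧸ N → ℝ),
      ∀ (s : G) (x : E), T (ρ s x) = cosetRep G N s (T x)) :
    ∃ T : E ≃ₗ[ℝ] (G ⧸ N → ℝ),
      (∀ x y : E, x ≤ y ↔ T x ≤ T y) ∧
      ∀ (s : G) (x : E), T (ρ s x) = cosetRep G N s (T x) := by
  classical
  haveI : IsOrderedAddMonoid E :=
    { add_le_add_left := fun a b h c => by
        first
          | exact hadd a b c h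
          | (rw [add_comm c a, add_comm c b]; exact hadd a b c h) }
  haveI : PosSMulMono ℝ E := by
    refine ⟨fun c hc x y hxy => ?_⟩
    have := hsmul c (y - x) hc (sub_nonneg.2 hxy)
    rw [smul_sub] at this
    exact sub_nonneg.1 this
  haveI : Fintype (G ⧸ N) := Fintype.ofFinite _
  obtain ⟨T₀, hT₀⟩ := hlin
  obtain ⟨u, hu⟩ := aux_exists_atom harch
  have hmul : ∀ (s t : G) (x : E), ρ (s * t) x = ρ s (ρ t x) := by
    intro s t x; rw [map_mul]; rfl
  have hinv : ∀ (s : G) (x : E), ρ s (ρ s⁻¹ x) = x := by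
    intro s x; rw [← hmul, mul_inv_cancel, map_one]; rfl
  -- N acts trivially
  have hNtriv : ∀ n ∈ N, ∀ x, ρ n x = x := by
    intro n hn x
    apply T₀.injective
    rw [hT₀]
    funext c
    change T₀ x (n⁻¹ • c) = T₀ x c
    refine congrArg (T₀ x) ?_
    induction c using QuotientGroup.induction_on with
    | H g =>
      change ((n⁻¹ * g : G) : G ⧸ N) = (g : G ⧸ N)
      rw [QuotientGroup.eq]
      have := hN.conj_mem n hn g⁻¹
      simpa [mul_assoc] using this
  have hcoset : ∀ s t : G, (s : G ⧸ N) = (t : G ⧸ N) → ∀ x, ρ s x = ρ t x := by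
    intro s t h x
    have h1 : s⁻¹ * t ∈ N := QuotientGroup.eq.1 h
    have : t = s * (s⁻¹ * t) := by group
    rw [this, hmul, hNtriv _ h1]
  have hnn : ∀ s x, 0 ≤ x → 0 ≤ ρ s x := by
    intro s x hx
    have := (hρ s 0 x).1 hx
    rwa [map_zero] at this
  let e : G → (E ≃o E) := fun s => ⟨(ρ s).toEquiv, fun {a b} => (hρ s a b).symm⟩
  have he : ∀ s x, e s x = ρ s x := fun _ _ => rfl
  have hinf : ∀ s x y, ρ s (x ⊓ y) = ρ s x ⊓ ρ s y := fun s x y => (e s).map_inf x y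
  have habs : ∀ s x, ρ s |x| = |ρ s x| := by
    intro s x
    have := (e s).map_sup x (-x)
    rw [he, he, he, map_neg] at this
    exact this
  have hat : ∀ s, AuxAtom (ρ s u) := by
    intro s
    refine ⟨hnn s u hu.1, fun h => hu.2.1 ((map_eq_zero_iff (ρ s) (ρ s).injective).1 h), ?_⟩
    intro y hy hyu
    obtain ⟨c, hc⟩ := hu.2.2 (ρ s⁻¹ y) (hnn _ _ hy) (by
      rw [hρ s, hinv]; exact hyu)
    refine ⟨c, ?_⟩
    rw [← map_smul, ← hc, hinv]
  let v : G ⧸ N → E := fun c => ρ c.out u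
  have hv : ∀ s : G, v (s : G ⧸ N) = ρ s u := fun s => hcoset _ _ (by simp) u
  have hvs : ∀ (s : G) (c : G ⧸ N), ρ s (v c) = v (s • c) := by
    intro s c
    induction c using QuotientGroup.induction_on with
    | H g =>
      rw [hv, ← hmul, ← hv]; rfl
  have hvat : ∀ c, AuxAtom (v c) := fun c => hat _
  -- the disjoint complement of the orbit vanishes
  have hDbot : auxD (Set.range v) = ⊥ := by
    rcases hirr (auxD (Set.range v)) (auxD_band _) (by
      rintro s x hx _ ⟨c, rfl⟩
      have h1 : |x| ⊓ |v (s⁻¹ • c)| = 0 := hx _ ⟨_, rfl⟩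
      have h2 := congrArg (ρ s) h1
      rw [hinf, habs, habs, hvs, smul_inv_smul, map_zero] at h2
      exact h2) with h | h
    · exact h
    · exfalso
      have h1 : v ((1 : G) : G ⧸ N) ∈ auxD (Set.range v) := h ▸ Submodule.mem_top
      have h2 := h1 _ ⟨((1 : G) : G ⧸ N), rfl⟩
      rw [inf_idem, abs_of_nonneg (hvat _).1] at h2
      exact (hvat _).2.1 h2
  have hspanpos : ∀ x, 0 ≤ x → x ∈ Submodule.span ℝ (Set.range v) := by
    intro x hx
    obtain ⟨y, hy, hxy, hd⟩ := aux_proj harch v hvat Finset.univ x hx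
    have : y ∈ auxD (Set.range v) := by
      rintro _ ⟨c, rfl⟩
      rw [abs_of_nonneg hy, abs_of_nonneg (hvat c).1]
      exact hd c (Finset.mem_univ c)
    rw [hDbot, Submodule.mem_bot] at this
    rwa [this, sub_zero] at hxy
  have hspan : ⊤ ≤ Submodule.span ℝ (Set.range v) := by
    intro x _
    rw [← posPart_sub_negPart x]
    exact sub_mem (hspanpos _ (posPart_nonneg x)) (hspanpos _ (negPart_nonneg x))
  have hcard : Fintype.card (G ⧸ N) = Module.finrank ℝ E := by
    rw [T₀.finrank_eq, Module.finrank_fintype_fun_eq_card]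
  let b := basisOfTopLeSpanOfCardEqFinrank v hspan hcard
  have hb : ∀ c, b c = v c := fun c => by simp [b]
  have hbat : ∀ c, AuxAtom (b c) := fun c => by rw [hb]; exact hvat c
  refine ⟨b.equivFun, ?_, ?_⟩
  · intro x y
    rw [← sub_nonneg, aux_coord b hbat, map_sub, sub_nonneg]
  · intro s x
    have : (b.equivFun.toLinearMap ∘ₗ (ρ s).toLinearMap) =
        ((cosetRep G N s).toLinearMap ∘ₗ b.equivFun.toLinearMap) := by
      apply b.ext
      intro c
      funext d
      change b.equivFun (ρ s (b c)) d = b.equivFun (b c) (s⁻¹ • d)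
      rw [hb, hvs, ← hb, ← hb, Module.Basis.equivFun_self, Module.Basis.equivFun_self]
      simp [eq_inv_smul_iff]
    exact LinearMap.congr_fun this x
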